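/- For ℓ odd, ℓ ≥ 7, in the graph H* (K_{ℓ-2} on v_0,...,v_{ℓ-3} colored c(v_iv_j)=i+j plus v_{ℓ-2} joined to v_{ℓ-3} and v_{ℓ-4} with colors 2ℓ-5, 2ℓ-6), the intersection of the color sets of all rainbow Hamiltonian paths starting at v_{ℓ-2} is empty. -/

import Mathlib

/-- Color of the pair `{i,j}`: `i+j` within `K_{ℓ-2}` (indices `≤ ℓ-3`); the two special
edges at `v_{ℓ-2}` (index `ℓ-2`) get colors `2ℓ-5`/`2ℓ-6`. -/
def colFun (ℓ i j : ℕ) : ℕ :=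
  if max i j ≤ ℓ - 3 then min i j + max i j
  else (if min i j = ℓ - 3 then 2*ℓ-5 else 2*ℓ-6)

theorem colFun_symm (ℓ i j : ℕ) : colFun ℓ i j = colFun ℓ j i := by
  unfold colFun; simp only [min_comm i j, max_comm i j]

/-- The edge coloring of `H* = H \ x` as a function on unordered pairs of vertices. -/
def colS (ℓ : ℕ) : Sym2 (Fin (ℓ-1)) → ℕ :=
  Sym2.lift ⟨fun i j => colFun ℓ (i : ℕ) (j : ℕ), fun i j => colFun_symm ℓ i j⟩

/-- The graph `H* = H \ x`: `K_{ℓ-2}` on `v_0,…,v_{ℓ-3}` (indices `0,…,ℓ-3`), plus the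
vertex `v_{ℓ-2}` (index `ℓ-2`) joined to `v_{ℓ-3}` and `v_{ℓ-4}`. -/
def HGstar (ℓ : ℕ) : SimpleGraph (Fin (ℓ-1)) :=
  SimpleGraph.fromRel (fun i j =>
    ((i : ℕ) ≤ ℓ - 3 ∧ (j : ℕ) ≤ ℓ - 3) ∨
    ((i : ℕ) = ℓ - 2 ∧ ((j : ℕ) = ℓ - 3 ∨ (j : ℕ) = ℓ - 4)))

theorem walk_of_seq {V : Type*} (G : SimpleGraph V) (s : ℕ → V) (n : ℕ)
    (h : ∀ i, i < n → G.Adj (s (i+1)) (s i)) :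
    ∃ p : G.Walk (s n) (s 0), p.support = (List.range (n+1)).reverse.map s ∧
      p.edges = (List.range n).reverse.map (fun i => s(s (i+1), s i)) := by
  induction n with
  | zero => exact ⟨SimpleGraph.Walk.nil, by simp, by simp⟩
  | succ m ih =>
    obtain ⟨p, hp, hq⟩ := ih (fun i hi => h i (by omega))
    refine ⟨SimpleGraph.Walk.cons (h m (by omega)) p, ?_, ?_⟩
    · rw [SimpleGraph.Walk.support_cons, hp, List.range_succ (n := m+1)]
      simp
    · rw [SimpleGraph.Walk.edges_cons, hq, List.range_succ (n := m)]
      simp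

/-- the transposition of `b` and `b-1` (identity for `b = 0`). -/
def sw (b i : ℕ) : ℕ := if i = b then b - 1 else if i + 1 = b then b else i

theorem sw_inj (b i j : ℕ) (h : sw b i = sw b j) : i = j := by
  unfold sw at h; split_ifs at h <;> omega

theorem sw_sw (b i : ℕ) : sw b (sw b i) = i := by
  unfold sw; split_ifs <;> omega

theorem sw_lt (b i n : ℕ) (hb : b < n) (hi : i ≤ n) : sw b i ≤ n := by
  unfold sw; split_ifs <;> omega

theorem sw_sum_inj (b i j : ℕ) (h : sw b (i+1) + sw b i = sw b (j+1) + sw b j) : i = j := by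
  unfold sw at h; split_ifs at h <;> omega

theorem exists_b (n k : ℕ) (hn : 5 ≤ n) :
    ∃ b, b < n ∧ ∀ i, i < n → sw b (i+1) + sw b i ≠ k := by
  by_cases hk : k % 2 = 0
  · refine ⟨0, by omega, fun i hi h => ?_⟩
    unfold sw at h; split_ifs at h <;> omega
  by_cases h1 : k = 1
  · refine ⟨2, by omega, fun i hi h => ?_⟩
    unfold sw at h; split_ifs at h <;> omega
  by_cases h2 : k ≤ 2 * n - 1
  · obtain ⟨b, rfl⟩ : ∃ b, k = 2 * b + 1 := ⟨k / 2, by omega⟩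
    refine ⟨b, by omega, fun i hi h => ?_⟩
    unfold sw at h; split_ifs at h <;> omega
  · refine ⟨0, by omega, fun i hi h => ?_⟩
    unfold sw at h; split_ifs at h <;> omega

/-- for odd `ℓ ≥ 7`, the intersection of the color sets of all rainbow
Hamiltonian paths of `H*` starting at `v_{ℓ-2}` is empty. -/
theorem stmt12 (ℓ : ℕ) (hℓ : 7 ≤ ℓ) (hodd : Odd ℓ) :
    {k : ℕ | ∀ (w : Fin (ℓ-1)) (p : (HGstar ℓ).Walk ⟨ℓ-2, by omega⟩ w),
        p.IsHamiltonian → (p.edges.map (colS ℓ)).Nodup →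
        k ∈ p.edges.map (colS ℓ)} = ∅ := by
  ext k
  simp only [Set.mem_ofPred_eq, Set.mem_empty_iff_false, iff_false]
  intro H
  obtain ⟨b, hb, hbk⟩ := exists_b (ℓ - 2) k (by omega)
  have hlt : ∀ i, i ≤ ℓ - 2 → sw b i < ℓ - 1 := fun i hi => by
    have := sw_lt b i (ℓ - 2) hb hi
    omega
  let s : ℕ → Fin (ℓ - 1) := fun i => if h : i ≤ ℓ - 2 then ⟨sw b i, hlt i h⟩ else ⟨0, by omega⟩
  have hs : ∀ i, i ≤ ℓ - 2 → (s i : ℕ) = sw b i := fun i hi => by simp [s, hi]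
  have hadj : ∀ i, i < ℓ - 2 → (HGstar ℓ).Adj (s (i+1)) (s i) := by
    intro i hi
    simp only [HGstar, SimpleGraph.fromRel_adj, ne_eq, Fin.ext_iff]
    rw [hs _ (by omega), hs _ (by omega)]
    unfold sw; split_ifs <;> omega
  have hcol : ∀ i, i < ℓ - 2 → colS ℓ s(s (i+1), s i) = sw b (i+1) + sw b i := by
    intro i hi
    simp only [colS, Sym2.lift_mk]
    rw [hs _ (by omega), hs _ (by omega)]
    unfold colFun sw
    simp only [max_def, min_def]
    split_ifs <;> omega
  obtain ⟨p, hp, hq⟩ := walk_of_seq (HGstar ℓ) s (ℓ - 2) hadj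
  have h0 : s (ℓ - 2) = ⟨ℓ - 2, by omega⟩ := by
    apply Fin.ext
    rw [hs _ le_rfl]
    unfold sw; split_ifs <;> simp <;> omega
  have hc : p.edges.map (colS ℓ) =
      (List.range (ℓ - 2)).reverse.map (fun i => sw b (i+1) + sw b i) := by
    rw [hq, List.map_map]
    apply List.map_congr_left
    intro i hi
    simp only [List.mem_reverse, List.mem_range] at hi
    exact hcol i hi
  have hpath : p.IsPath := by
    rw [SimpleGraph.Walk.isPath_def, hp]
    refine List.Nodup.map_on ?_ (List.nodup_reverse.2 List.nodup_range)
    intro i hi j hj hij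
    simp only [List.mem_reverse, List.mem_range] at hi hj
    have := congrArg Fin.val hij
    rw [hs _ (by omega), hs _ (by omega)] at this
    exact sw_inj b i j this
  have hham : p.IsHamiltonian := by
    apply hpath.isHamiltonian_of_mem
    intro w
    rw [hp]
    simp only [List.mem_map, List.mem_reverse, List.mem_range]
    have hw := sw_lt b w (ℓ - 2) hb (by omega)
    refine ⟨sw b w, by omega, Fin.ext ?_⟩
    rw [hs _ hw, sw_sw]
  have hnd : (p.edges.map (colS ℓ)).Nodup := by
    rw [hc]
    exact List.Nodup.map (fun i j h => sw_sum_inj b i j h) (List.nodup_reverse.2 List.nodup_range)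
  have key : ∀ (u : Fin (ℓ - 1)) (hu : s (ℓ - 2) = u)
      (H : ∀ (w : Fin (ℓ-1)) (p : (HGstar ℓ).Walk u w),
        p.IsHamiltonian → (p.edges.map (colS ℓ)).Nodup →
        k ∈ p.edges.map (colS ℓ)), k ∈ p.edges.map (colS ℓ) := by
    intro u hu H
    subst hu
    exact H _ p hham hnd
  have := key _ h0 H
  rw [hc] at this
  simp only [List.mem_map, List.mem_reverse, List.mem_range] at this
  obtain ⟨i, hi, hik⟩ := this
  exact hbk i hi hik
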